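/- Let V be a finite-dimensional real inner product space, let w₁,…,wₘ, n ∈ V be linearly independent, and let p⁻ ∈ V satisfy ⟨p⁻, wₖ⟩ = 0 for all k = 1,…,m. Consider pairs (λ, α) ∈ ℝᵐ × ℝ such that p⁺ := p⁻ + Σₖ λₖ wₖ + α·n satisfies both ⟨p⁺, p⁺⟩ = ⟨p⁻, p⁻⟩ (conservation of energy) and ⟨p⁺, wₗ⟩ = 0 for all ℓ (post-impact nonholonomic constraints). Then (0,0) is a solution, every solution with α = 0 equals (0,0), and there exists at most one solution with α ≠ 0. In particular there is at most one nontrivial solution (λ,α) ≠ (0,0). -/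

import Mathlib

open RealInnerProductSpace

/-- The elastic nonholonomic impact conditions for multipliers `(lam, α)`:
the post-impact momentum `p⁺ = p⁻ + ∑ k, lam k • w k + α • n` conserves energy
and satisfies the nonholonomic constraints `⟪p⁺, w ℓ⟫ = 0`. -/
def IsImpactSolution {V : Type*} [NormedAddCommGroup V] [InnerProductSpace ℝ V]
    {m : ℕ} (w : Fin m → V) (n : V) (p : V) (lam : Fin m → ℝ) (α : ℝ) : Prop :=
  ⟪p + (∑ k, lam k • w k) + α • n, p + (∑ k, lam k • w k) + α • n⟫ = ⟪p, p⟫ ∧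
  ∀ ℓ : Fin m, ⟪p + (∑ k, lam k • w k) + α • n, w ℓ⟫ = 0

theorem impact_key {V : Type*} [NormedAddCommGroup V] [InnerProductSpace ℝ V]
    {m : ℕ} (w : Fin m → V) (n : V)
    (hind : LinearIndependent ℝ (Fin.snoc w n : Fin (m + 1) → V))
    (c : Fin m → ℝ) (a : ℝ) (hw : ∀ l, ⟪(∑ k, c k • w k) + a • n, w l⟫ = 0)
    (hn : a * ⟪(∑ k, c k • w k) + a • n, n⟫ = 0) : c = 0 ∧ a = 0 := by
  have h0 : (∑ k, c k • w k) + a • n = 0 := by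
    rw [← inner_self_eq_zero (𝕜 := ℝ)]
    generalize hx : (∑ k, c k • w k) + a • n = x at hw hn
    nth_rewrite 2 [← hx]
    rw [inner_add_right, inner_sum, real_inner_smul_right, hn]
    simp [real_inner_smul_right, hw]
  have h1 := Fintype.linearIndependent_iff.1 hind (Fin.snoc c a : Fin (m + 1) → ℝ) (by
    rw [Fin.sum_univ_castSucc]
    simpa using h0)
  refine ⟨funext fun i => ?_, ?_⟩
  · simpa using h1 i.castSucc
  · simpa using h1 (Fin.last m)

/-- **At most one nontrivial elastic nonholonomic impact.**
Let `w 1, …, w m, n` be linearly independent in a finite-dimensional real inner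
product space and let the pre-impact momentum `p⁻` satisfy the constraints
`⟪p⁻, w k⟫ = 0`.  Then `(0,0)` solves the elastic impact equations, every
solution with `α = 0` is `(0,0)`, there is at most one solution with `α ≠ 0`,
and hence at most one nontrivial solution `(lam, α) ≠ (0,0)`. -/
theorem elastic_impact_at_most_one_nontrivial_solution
    {V : Type*} [NormedAddCommGroup V] [InnerProductSpace ℝ V]
    [FiniteDimensional ℝ V] {m : ℕ} (w : Fin m → V) (n : V)
    (hind : LinearIndependent ℝ (Fin.snoc w n : Fin (m + 1) → V))
    (p : V) (hp : ∀ k, ⟪p, w k⟫ = 0) :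
    IsImpactSolution w n p 0 0 ∧
    (∀ lam : Fin m → ℝ, IsImpactSolution w n p lam 0 → lam = 0) ∧
    (∀ (lam₁ lam₂ : Fin m → ℝ) (α₁ α₂ : ℝ), α₁ ≠ 0 → α₂ ≠ 0 →
      IsImpactSolution w n p lam₁ α₁ → IsImpactSolution w n p lam₂ α₂ →
      lam₁ = lam₂ ∧ α₁ = α₂) ∧
    (∀ (lam₁ lam₂ : Fin m → ℝ) (α₁ α₂ : ℝ),
      (lam₁, α₁) ≠ (0, 0) → (lam₂, α₂) ≠ (0, 0) →
      IsImpactSolution w n p lam₁ α₁ → IsImpactSolution w n p lam₂ α₂ →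
      lam₁ = lam₂ ∧ α₁ = α₂) := by
  have hperp : ∀ lam α, IsImpactSolution w n p lam α →
      ∀ l, ⟪(∑ k, lam k • w k) + α • n, w l⟫ = 0 := by
    intro lam α h l
    have := h.2 l
    rwa [add_assoc, inner_add_left, hp, zero_add] at this
  have hen : ∀ lam α, α ≠ 0 → IsImpactSolution w n p lam α →
      ⟪(∑ k, lam k • w k) + α • n, n⟫ = -2 * ⟪p, n⟫ := by
    intro lam α hα h
    have h1 := hperp lam α h
    have h2 := h.1
    rw [add_assoc] at h2
    generalize hx : (∑ k, lam k • w k) + α • n = x at h1 h2 ⊢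
    have e1 : ⟪p, x⟫ = α * ⟪p, n⟫ := by
      rw [← hx, inner_add_right, inner_sum, real_inner_smul_right]
      simp [real_inner_smul_right, hp]
    have e2 : ⟪x, x⟫ = α * ⟪x, n⟫ := by
      nth_rewrite 2 [← hx]
      rw [inner_add_right, inner_sum, real_inner_smul_right]
      simp [real_inner_smul_right, h1]
    rw [real_inner_add_add_self, e1, e2] at h2
    apply mul_left_cancel₀ hα
    linarith
  have A : ∀ lam : Fin m → ℝ, IsImpactSolution w n p lam 0 → lam = 0 := fun lam h =>
    (impact_key w n hind lam 0 (hperp lam 0 h) (by simp)).1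
  have B : ∀ (lam₁ lam₂ : Fin m → ℝ) (α₁ α₂ : ℝ), α₁ ≠ 0 → α₂ ≠ 0 →
      IsImpactSolution w n p lam₁ α₁ → IsImpactSolution w n p lam₂ α₂ →
      lam₁ = lam₂ ∧ α₁ = α₂ := by
    intro l₁ l₂ a₁ a₂ h₁ h₂ s₁ s₂
    have e : (∑ k, (l₁ - l₂) k • w k) + (a₁ - a₂) • n =
        ((∑ k, l₁ k • w k) + a₁ • n) - ((∑ k, l₂ k • w k) + a₂ • n) := by
      simp only [Pi.sub_apply, sub_smul, Finset.sum_sub_distrib]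
      abel
    have := impact_key w n hind (l₁ - l₂) (a₁ - a₂)
      (fun l => by rw [e, inner_sub_left, hperp _ _ s₁, hperp _ _ s₂, sub_zero])
      (by rw [e, inner_sub_left, hen _ _ h₁ s₁, hen _ _ h₂ s₂, sub_self, mul_zero])
    exact ⟨sub_eq_zero.1 this.1, sub_eq_zero.1 this.2⟩
  refine ⟨⟨by simp, by simpa using hp⟩, A, B, ?_⟩
  intro l₁ l₂ a₁ a₂ h₁ h₂ s₁ s₂
  refine B l₁ l₂ a₁ a₂ ?_ ?_ s₁ s₂
  · rintro rfl
    exact h₁ (by rw [A l₁ s₁])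
  · rintro rfl
    exact h₂ (by rw [A l₂ s₂])
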